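/- Fix ε > 0, let α₁, α₂, … be a sequence of elements of 𝒦, and let γ₁, γ₂, … be a sequence of real numbers. Then for Lebesgue-almost all β ∈ ℝ, for every i ∈ ℕ and every δ ∈ ℝ, the inequality n·‖nα_i − γ_i‖·‖nβ − δ‖ < (log log log n)^{ε + 1/2} / (log n)^{1/2} has infinitely many solutions n ∈ ℕ. -/

import Mathlib

open Filter MeasureTheory Real

/-- Distance from `x` to the nearest integer, `‖x‖ = min {|x - k| : k ∈ ℤ}`. -/
noncomputable def dni (x : ℝ) : ℝ := |x - round x|

/-- The set of badly approximable numbers. -/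
noncomputable def Bad : Set ℝ :=
  {α : ℝ | 0 < Filter.atTop.liminf (fun n : ℕ => (n : ℝ) * dni (n * α))}

/-- The `t`-th continued fraction convergent denominator `q_t(α)` of `α`. -/
noncomputable def qden (α : ℝ) (t : ℕ) : ℝ := (GenContFract.of α).dens t

/-- The set `𝒦` of irrationals whose convergent denominators grow at most exponentially. -/
noncomputable def KSet : Set ℝ :=
  {α : ℝ | Irrational α ∧ ∃ C : ℝ, ∀ t : ℕ, 1 ≤ t → Real.log (qden α t) / t ≤ C}

theorem cf_facts (α : ℝ) (hα : Irrational α) : ∃ p q : ℕ → ℤ,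
    (∀ t, (q t : ℝ) = qden α t) ∧ (∀ t, 1 ≤ q t) ∧ (∀ t, 2 * q t ≤ q (t+2)) ∧
    (∀ t, IsCoprime (p t) (q t)) ∧
    (∀ t, |α - (p t : ℝ) / q t| ≤ 1 / (q t : ℝ)^2) := by
  have hnt : ∀ n, ¬ (GenContFract.of α).TerminatedAt n := by
    intro n hn
    have : (GenContFract.of α).Terminates := ⟨n, hn⟩
    rw [GenContFract.terminates_iff_rat] at this
    obtain ⟨r, hr⟩ := this
    exact hα ⟨r, hr.symm⟩
  have hs : ∀ n, ∃ z : ℤ, 1 ≤ z ∧ (GenContFract.of α).s.get? n = some ⟨1, (z:ℝ)⟩ := by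
    intro n
    have h1 := hnt n
    rw [GenContFract.TerminatedAt, Stream'.Seq.TerminatedAt] at h1
    obtain ⟨gp, hgp⟩ := Option.ne_none_iff_exists'.1 h1
    obtain ⟨h2, z, hz⟩ := GenContFract.of_partNum_eq_one_and_exists_int_partDen_eq hgp
    have h3 := GenContFract.of_one_le_get?_partDen (GenContFract.partDen_eq_s_b hgp)
    refine ⟨z, ?_, ?_⟩
    · rw [hz] at h3
      exact_mod_cast h3
    · rw [hgp, ← h2, ← hz]
  have hint : ∀ n, (∃ a b : ℤ, (a:ℝ) = (GenContFract.of α).nums n ∧ (b:ℝ) = (GenContFract.of α).dens n)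
     ∧ (∃ a b : ℤ, (a:ℝ) = (GenContFract.of α).nums (n+1) ∧ (b:ℝ) = (GenContFract.of α).dens (n+1)) := by
    intro n
    induction n with
    | zero =>
      refine ⟨⟨⌊α⌋, 1, by simp, by simp⟩, ?_⟩
      obtain ⟨z, hz, hs0⟩ := hs 0
      have h1 := GenContFract.first_num_eq hs0
      have h2 := GenContFract.first_den_eq hs0
      refine ⟨z * ⌊α⌋ + 1, z, ?_, ?_⟩
      · rw [h1]; push_cast; simp
      · rw [h2]
    | succ n ih =>
      refine ⟨ih.2, ?_⟩
      obtain ⟨⟨a, b, ha, hb⟩, ⟨a', b', ha', hb'⟩⟩ := ih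
      obtain ⟨z, hz, hs0⟩ := hs (n+1)
      have h1 := GenContFract.nums_recurrence hs0 ha.symm ha'.symm
      have h2 := GenContFract.dens_recurrence hs0 hb.symm hb'.symm
      refine ⟨z * a' + a, z * b' + b, ?_, ?_⟩
      · rw [h1]; push_cast; simp
      · rw [h2]; push_cast; simp
  choose p q hp hq using fun n => (hint n).1
  have hq1 : ∀ t, 1 ≤ q t := by
    intro t
    have h := GenContFract.succ_nth_fib_le_of_nth_den (v := α) (n := t) (Or.inr (hnt _))
    rw [← hq] at h
    have h2 : 1 ≤ Nat.fib (t+1) := Nat.fib_pos.2 (by omega)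
    have h3 : (1:ℝ) ≤ (q t:ℝ) := le_trans (by exact_mod_cast h2) h
    exact_mod_cast h3
  have hmono : ∀ t, q t ≤ q (t+1) := by
    intro t
    have := GenContFract.of_den_mono (v := α) (n := t)
    rw [← hq, ← hq] at this
    exact_mod_cast this
  refine ⟨p, q, hq, hq1, ?_, ?_, ?_⟩
  · intro t
    obtain ⟨z, hz, hs0⟩ := hs (t+1)
    have h2 := GenContFract.dens_recurrence hs0 rfl rfl
    rw [← hq, ← hq, ← hq] at h2
    simp only at h2
    have h3 : q (t+2) = z * q (t+1) + 1 * q t := by exact_mod_cast h2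
    have := hmono t
    have := hq1 (t+1)
    nlinarith
  · intro t
    have h := SimpContFract.determinant (s := SimpContFract.of α) (n := t) (hnt t)
    have h' : (GenContFract.of α).nums t * (GenContFract.of α).dens (t + 1) -
      (GenContFract.of α).dens t * (GenContFract.of α).nums (t + 1) = (-1) ^ (t + 1) := h
    rw [← hp, ← hq, ← hp, ← hq] at h'
    have h3 : p t * q (t+1) - q t * p (t+1) = (-1)^(t+1) := by exact_mod_cast h'
    refine ⟨(-1)^(t+1) * q (t+1), -(-1)^(t+1) * p (t+1), ?_⟩
    have h4 : ((-1:ℤ)^(t+1)) * (-1)^(t+1) = 1 := by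
      rw [← mul_pow]; simp
    linear_combination (-1)^(t+1) * h3 + h4
  · intro t
    have h := GenContFract.abs_sub_convs_le (v := α) (hnt t)
    rw [GenContFract.conv_eq_num_div_den, ← hp, ← hq, ← hq] at h
    refine h.trans ?_
    have h1 : (1:ℝ) ≤ q t := by exact_mod_cast hq1 t
    have h2 : (q t:ℝ) ≤ q (t+1) := by exact_mod_cast hmono t
    rw [pow_two]
    gcongr

theorem dni_le (x : ℝ) (m : ℤ) : dni x ≤ |x - m| := round_le x m

theorem dni_nonneg (x : ℝ) : 0 ≤ dni x := abs_nonneg _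

theorem grid (α γ : ℝ) (p q : ℤ) (hq : 1 ≤ q) (hpq : IsCoprime p q)
    (h : |α - (p : ℝ) / q| ≤ 1 / (q : ℝ)^2) :
    ∃ n : ℕ, (q:ℝ) ≤ n ∧ (n:ℝ) ≤ 2 * q ∧ (n:ℝ) * dni (n * α - γ) ≤ 6 := by
  obtain ⟨u, v, huv⟩ := hpq
  set j := round (q * γ) with hj
  have hq0 : 0 < q := by omega
  set m : ℤ := q + (j * u) % q with hm
  have hm1 := Int.emod_nonneg (j*u) hq0.ne'
  have hm2 := Int.emod_lt_of_pos (j*u) hq0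
  have hmq : q ≤ m := by omega
  have hmq2 : m ≤ 2 * q := by omega
  have hqr : (1:ℝ) ≤ q := by exact_mod_cast hq
  have hqp : (0:ℝ) < q := by linarith
  refine ⟨m.toNat, ?_⟩
  have hc : ((m.toNat : ℕ) : ℝ) = (m : ℝ) := by
    have : ((m.toNat : ℕ) : ℤ) = m := Int.toNat_of_nonneg (by omega)
    exact_mod_cast this
  rw [hc]
  have hmr : (q:ℝ) ≤ m := by exact_mod_cast hmq
  have hmr2 : (m:ℝ) ≤ 2 * q := by exact_mod_cast hmq2
  refine ⟨hmr, hmr2, ?_⟩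
  have hdiv := Int.emod_add_mul_ediv (j*u) q
  -- m * p = j + q * w
  have hw : ∃ w : ℤ, m * p = j + q * w := by
    refine ⟨p - (j*u/q) * p - j * v, ?_⟩
    rw [hm]
    linear_combination p * hdiv + j * huv
  obtain ⟨w, hw⟩ := hw
  have hwr : (m:ℝ) * p = j + q * w := by exact_mod_cast hw
  have h1 : dni (m * α - γ) ≤ 3 / q := by
    refine (dni_le _ w).trans ?_
    have e : (m:ℝ) * α - γ - w = m * (α - p / q) + (j - q * γ) / q := by
      field_simp
      linear_combination hwr
    rw [e]
    have a1 : |(m:ℝ) * (α - p / q)| ≤ 2 / q := by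
      rw [abs_mul, abs_of_nonneg (by linarith : (0:ℝ) ≤ m)]
      calc (m:ℝ) * |α - p/q| ≤ (2 * q) * (1 / (q:ℝ)^2) := by gcongr
        _ = 2 / q := by field_simp
    have a2 : |((j:ℝ) - q * γ) / q| ≤ 1 / q := by
      rw [abs_div, abs_of_pos hqp]
      gcongr
      rw [abs_sub_comm]
      have := abs_sub_round ((q:ℝ) * γ)
      linarith
    calc _ ≤ _ := abs_add_le _ _
      _ ≤ 2 / (q:ℝ) + 1 / q := add_le_add a1 a2
      _ = 3 / (q:ℝ) := by ring
  calc (m:ℝ) * dni (m * α - γ) ≤ (2*q) * (3 / q) := by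
        gcongr
        exact dni_nonneg _
    _ = 6 := by field_simp; norm_num

theorem exists_seq (α γ : ℝ) (hα : α ∈ KSet) : ∃ (n : ℕ → ℕ) (C : ℝ), 0 < C ∧
    (∀ k, 1 ≤ n k) ∧ (∀ k, 2 * n k ≤ n (k+1)) ∧ (∀ k, (n k : ℝ) * dni (n k * α - γ) ≤ 6) ∧
    (∀ k, Real.log (n k) ≤ C * (k+1)) := by
  obtain ⟨hirr, C, hC⟩ := hα
  obtain ⟨p, q, hq, hq1, hq2, hcop, happ⟩ := cf_facts α hirr
  have key := fun k : ℕ => grid α γ (p (4*(k+1))) (q (4*(k+1))) (hq1 _) (hcop _) (happ _)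
  choose n hn1 hn2 hn3 using key
  have hqr : ∀ t, (1:ℝ) ≤ q t := fun t => by exact_mod_cast hq1 t
  refine ⟨n, 1 + 4 * |C|, by positivity, ?_, ?_, hn3, ?_⟩
  · intro k
    have := (hqr _).trans (hn1 k)
    exact_mod_cast this
  · intro k
    have h1 := hn2 k
    have h2 := hn1 (k+1)
    have h3 := hq2 (4*(k+1))
    have h4 := hq2 (4*(k+1)+2)
    have h5 : 4 * q (4*(k+1)) ≤ q (4*(k+1+1)) := by
      have : 4*(k+1+1) = 4*(k+1)+2+2 := by ring
      rw [this]; omega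
    have h6 : (4:ℝ) * q (4*(k+1)) ≤ q (4*(k+1+1)) := by exact_mod_cast h5
    have : (2:ℝ) * n k ≤ n (k+1) := by linarith
    exact_mod_cast this
  · intro k
    have h1 : (0:ℝ) < n k := by linarith [hqr (4*(k+1)), hn1 k]
    have h2 := Real.log_le_log h1 (hn2 k)
    rw [Real.log_mul (by norm_num) (by linarith [hqr (4*(k+1))])] at h2
    have h3 := hC (4*(k+1)) (by omega)
    rw [← hq, div_le_iff₀ (by positivity)] at h3
    have h4 : Real.log 2 ≤ 1 := by linarith [Real.log_two_lt_d9]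
    have h5 := le_abs_self C
    push_cast at h3
    have : C * (4 * ((k:ℝ)+1)) ≤ |C| * (4 * ((k:ℝ)+1)) := by gcongr
    have hk : (0:ℝ) ≤ k := by positivity
    nlinarith

def cell (n : ℕ) (c h : ℝ) : Set ℝ := {β | Int.fract ((n:ℝ) * β) ∈ Set.Ico c (c+h)}

theorem cell_meas (n : ℕ) (c h : ℝ) : MeasurableSet (cell n c h) := by
  have : Measurable (fun β : ℝ => Int.fract ((n:ℝ) * β)) :=
    measurable_fract.comp (measurable_const_mul _)
  exact this measurableSet_Ico

theorem mem_Ico_iff (n : ℕ) (hn : 1 ≤ n) (c h β : ℝ) (m : ℤ) :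
    β ∈ Set.Ico (((m:ℝ) + c) / n) ((m + c + h) / n) ↔ (m:ℝ) + c ≤ n * β ∧ n * β < m + c + h := by
  have : (0:ℝ) < n := by exact_mod_cast hn
  rw [Set.mem_Ico, div_le_iff₀ this, lt_div_iff₀ this, mul_comm]

theorem vol_piece (n : ℕ) (hn : 1 ≤ n) (c h : ℝ) (hh : 0 ≤ h) (m : ℝ) :
    volume.real (Set.Ico ((m + c) / n) ((m + c + h) / n)) = h / n := by
  have : (0:ℝ) < n := by exact_mod_cast hn
  rw [Real.volume_real_Ico_of_le (div_le_div_of_nonneg_right (by linarith) this.le)]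
  ring

theorem cell_eq (n : ℕ) (hn : 1 ≤ n) (c h : ℝ) (hc : 0 ≤ c) (hch : c + h ≤ 1) :
    cell n c h ∩ Set.Ico 0 1 =
      ⋃ m ∈ Finset.range n, Set.Ico (((m:ℝ) + c) / n) ((m + c + h) / n) := by
  have hn0 : (0:ℝ) < n := by exact_mod_cast hn
  ext β
  simp only [Set.mem_inter_iff, Set.mem_iUnion, Finset.mem_range, exists_prop]
  constructor
  · rintro ⟨⟨h1, h2⟩, h3, h4⟩
    have h5 : 0 ≤ ⌊(n:ℝ) * β⌋ := Int.floor_nonneg.2 (by positivity)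
    have h6 : ⌊(n:ℝ) * β⌋ < n := by
      rw [Int.floor_lt]; push_cast; nlinarith
    obtain ⟨m, hm⟩ := Int.eq_ofNat_of_zero_le h5
    refine ⟨m, by omega, ?_⟩
    have := mem_Ico_iff n hn c h β m
    push_cast at this
    rw [this]
    unfold Int.fract at h1 h2
    rw [hm] at h1 h2
    push_cast at h1 h2
    constructor <;> linarith
  · rintro ⟨m, hm, h1⟩
    have := mem_Ico_iff n hn c h β m
    push_cast at this
    rw [this] at h1
    have hf : ⌊(n:ℝ) * β⌋ = m := by
      rw [Int.floor_eq_iff]; push_cast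
      constructor <;> linarith
    have hm' : (m:ℝ) + 1 ≤ n := by exact_mod_cast hm
    refine ⟨?_, ?_, ?_⟩
    · show Int.fract ((n:ℝ) * β) ∈ Set.Ico c (c + h)
      rw [← Int.self_sub_floor, hf]; push_cast
      constructor <;> linarith
    · by_contra hb
      push Not at hb
      have : (n:ℝ) * β < 0 := by nlinarith
      have : (0:ℝ) ≤ m := by positivity
      linarith
    · by_contra hb
      push Not at hb
      nlinarith

theorem cell_vol (n : ℕ) (hn : 1 ≤ n) (c h : ℝ) (hc : 0 ≤ c) (hh : 0 ≤ h) (hch : c + h ≤ 1) :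
    volume.real (cell n c h ∩ Set.Ico 0 1) = h := by
  have hn0 : (0:ℝ) < n := by exact_mod_cast hn
  rw [cell_eq n hn c h hc hch, measureReal_biUnion_finset (h := fun _ _ => measure_Ico_lt_top.ne)]
  · simp only [vol_piece n hn c h hh]
    simp
    field_simp
  · intro m _ m' _ hne
    rw [Function.onFun, Set.disjoint_left]
    intro β h1 h2
    have e1 := mem_Ico_iff n hn c h β m
    have e2 := mem_Ico_iff n hn c h β m'
    push_cast at e1 e2
    rw [e1] at h1
    rw [e2] at h2
    apply hne
    have a : (m:ℝ) < m' + 1 := by linarith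
    have b : (m':ℝ) < m + 1 := by linarith
    have a' : m < m' + 1 := by exact_mod_cast a
    have b' : m' < m + 1 := by exact_mod_cast b
    omega
  · intro m _
    exact measurableSet_Ico

theorem cell_vol_le (n : ℕ) (hn : 1 ≤ n) (c h a b : ℝ) (hh : 0 ≤ h) (hab : a ≤ b) :
    volume.real (cell n c h ∩ Set.Ico a b) ≤ h * (b - a) + 2 * h / n := by
  have hn0 : (0:ℝ) < n := by exact_mod_cast hn
  have hsub : cell n c h ∩ Set.Ico a b ⊆
      ⋃ m ∈ Finset.Icc ⌊(n:ℝ) * a⌋ ⌊(n:ℝ) * b⌋, Set.Ico (((m:ℝ) + c) / n) ((m + c + h) / n) := by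
    rintro β ⟨⟨h1, h2⟩, h3, h4⟩
    simp only [Set.mem_iUnion, exists_prop]
    refine ⟨⌊(n:ℝ) * β⌋, ?_, ?_⟩
    · rw [Finset.mem_Icc]
      constructor <;> apply Int.floor_le_floor <;> gcongr
    · rw [mem_Ico_iff n hn]
      unfold Int.fract at h1 h2
      constructor <;> linarith
  have hle : ⌊(n:ℝ) * a⌋ ≤ ⌊(n:ℝ) * b⌋ := by apply Int.floor_le_floor; gcongr
  calc volume.real (cell n c h ∩ Set.Ico a b) ≤ _ := by
        refine measureReal_mono hsub ?_
        refine ne_of_lt (measure_biUnion_lt_top (Finset.finite_toSet _) ?_)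
        intro i _
        simp
    _ ≤ ∑ m ∈ Finset.Icc ⌊(n:ℝ) * a⌋ ⌊(n:ℝ) * b⌋,
          volume.real (Set.Ico (((m:ℝ) + c) / n) ((m + c + h) / n)) :=
        measureReal_biUnion_finset_le _ _
    _ = ((⌊(n:ℝ) * b⌋ + 1 - ⌊(n:ℝ) * a⌋ : ℤ) : ℝ) * (h / n) := by
        simp only [vol_piece n hn c h hh]
        rw [Finset.sum_const, Int.card_Icc, nsmul_eq_mul]
        congr 1
        have : (((⌊(n:ℝ) * b⌋ + 1 - ⌊(n:ℝ) * a⌋).toNat : ℕ) : ℤ) = ⌊(n:ℝ) * b⌋ + 1 - ⌊(n:ℝ) * a⌋ :=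
          Int.toNat_of_nonneg (by omega)
        exact_mod_cast this
    _ ≤ (n * b - n * a + 2) * (h / n) := by
        gcongr
        push_cast
        linarith [Int.floor_le ((n:ℝ)*b), Int.lt_floor_add_one ((n:ℝ)*a)]
    _ = h * (b - a) + 2 * h / n := by field_simp

theorem pair_vol (n n' : ℕ) (hn : 1 ≤ n) (hn' : 1 ≤ n') (c h : ℝ) (hc : 0 ≤ c) (hh : 0 ≤ h)
    (hch : c + h ≤ 1) :
    volume.real ((cell n c h ∩ cell n' c h) ∩ Set.Ico 0 1) ≤ h ^ 2 + 2 * h * (n / n') := by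
  have hn0 : (0:ℝ) < n := by exact_mod_cast hn
  have hn0' : (0:ℝ) < n' := by exact_mod_cast hn'
  have e : (cell n c h ∩ cell n' c h) ∩ Set.Ico 0 1 =
      ⋃ m ∈ Finset.range n, cell n' c h ∩ Set.Ico (((m:ℝ) + c) / n) ((m + c + h) / n) := by
    rw [← Set.inter_iUnion₂, ← cell_eq n hn c h hc hch]
    ext; simp only [Set.mem_inter_iff]; tauto
  rw [e]
  calc _ ≤ ∑ m ∈ Finset.range n,
          volume.real (cell n' c h ∩ Set.Ico (((m:ℝ) + c) / n) ((m + c + h) / n)) :=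
        measureReal_biUnion_finset_le _ _
    _ ≤ ∑ m ∈ Finset.range n, (h * (h / n) + 2 * h / n') := by
        apply Finset.sum_le_sum
        intro m _
        have := cell_vol_le n' hn' c h (((m:ℝ) + c) / n) ((m + c + h) / n) hh
          (div_le_div_of_nonneg_right (by linarith) hn0.le)
        refine this.trans (le_of_eq ?_)
        field_simp
        ring
    _ = _ := by
        simp
        field_simp

theorem second_moment {Ω : Type*} [MeasurableSpace Ω] (μ : Measure Ω) [IsProbabilityMeasure μ]
    (s : Finset ℕ) (A : ℕ → Set Ω) (hA : ∀ k, MeasurableSet (A k)) (h : ℝ) (hh : 0 < h)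
    (e : ℕ → ℕ → ℝ) (h1 : ∀ k ∈ s, μ.real (A k) = h)
    (h2 : ∀ j ∈ s, ∀ k ∈ s, μ.real (A j ∩ A k) ≤ h ^ 2 + e j k) :
    (s.card * h) ^ 2 * μ.real {x | ∀ k ∈ s, x ∉ A k} ≤ ∑ j ∈ s, ∑ k ∈ s, e j k := by
  classical
  set F : Ω → ℝ := fun x => ∑ k ∈ s, ((A k).indicator 1 x - h) with hF
  have hI : ∀ k, Integrable ((A k).indicator (1 : Ω → ℝ)) μ := fun k =>
    (integrable_const (1:ℝ)).indicator (hA k)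
  have hprod : ∀ j k, ∀ x, ((A j).indicator (1 : Ω → ℝ) x - h) * ((A k).indicator 1 x - h) =
      (A j ∩ A k).indicator (1 : Ω → ℝ) x - h * (A j).indicator 1 x - h * (A k).indicator 1 x + h^2 := by
    intro j k x
    by_cases a : x ∈ A j <;> by_cases b : x ∈ A k <;> simp [a, b] <;> ring
  have hI2 : ∀ j k, Integrable ((A j ∩ A k).indicator (1 : Ω → ℝ)) μ := fun j k =>
    (integrable_const (1:ℝ)).indicator ((hA j).inter (hA k))
  have hPI : ∀ j k, Integrable (fun x => ((A j).indicator (1 : Ω → ℝ) x - h) * ((A k).indicator 1 x - h)) μ := by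
    intro j k
    simp only [hprod]
    exact (((hI2 j k).sub ((hI j).const_mul h)).sub ((hI k).const_mul h)).add (integrable_const _)
  have hsq : ∀ x, F x ^ 2 = ∑ j ∈ s, ∑ k ∈ s,
      ((A j).indicator (1 : Ω → ℝ) x - h) * ((A k).indicator 1 x - h) := by
    intro x
    rw [hF, pow_two, Finset.sum_mul_sum]
  have hFI : Integrable (fun x => F x ^ 2) μ := by
    simp only [hsq]
    exact integrable_finsetSum _ fun j _ => integrable_finsetSum _ fun k _ => hPI j k
  have hint : ∫ x, F x ^ 2 ∂μ ≤ ∑ j ∈ s, ∑ k ∈ s, e j k := by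
    simp only [hsq]
    rw [integral_finsetSum _ fun j _ => integrable_finsetSum _ fun k _ => hPI j k]
    apply Finset.sum_le_sum
    intro j hj
    rw [integral_finsetSum _ fun k _ => hPI j k]
    apply Finset.sum_le_sum
    intro k hk
    simp only [hprod]
    have i1 : Integrable (fun x => h * (A j).indicator (1 : Ω → ℝ) x) μ := (hI j).const_mul h
    have i2 : Integrable (fun x => h * (A k).indicator (1 : Ω → ℝ) x) μ := (hI k).const_mul h
    have i3 : Integrable (fun x => (A j ∩ A k).indicator (1 : Ω → ℝ) x - h * (A j).indicator 1 x) μ :=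
      (hI2 j k).sub i1
    have i4 : Integrable (fun x => (A j ∩ A k).indicator (1 : Ω → ℝ) x - h * (A j).indicator 1 x
      - h * (A k).indicator 1 x) μ := i3.sub i2
    rw [integral_add i4 (integrable_const _), integral_sub i3 i2,
      integral_sub (hI2 j k) i1, integral_const_mul, integral_const_mul,
      integral_indicator_one ((hA j).inter (hA k)), integral_indicator_one (hA j),
      integral_indicator_one (hA k), h1 j hj, h1 k hk]
    simp
    linarith [h2 j hj k hk]
  refine le_trans ?_ hint
  have hm := mul_meas_ge_le_integral_of_nonneg (μ := μ) (f := fun x => F x ^ 2)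
    (Filter.Eventually.of_forall fun x => sq_nonneg _) hFI ((s.card * h)^2)
  refine le_trans ?_ hm
  gcongr
  · exact measure_ne_top _ _
  · intro hx
    rename_i x
    have : F x = - (s.card * h) := by
      rw [hF]
      simp only
      rw [Finset.sum_congr rfl (fun k hk => by
        rw [Set.indicator_of_notMem (hx k hk)])]
      simp
    simp [this]

theorem geom_row (j : ℕ) (s : Finset ℕ) : ∑ k ∈ s, ((1:ℝ)/2)^(Int.natAbs ((k:ℤ) - j)) ≤ 4 := by
  classical
  have hs := summable_geometric_two
  have htot := tsum_geometric_two
  have key : ∀ (t : Finset ℕ) (f : ℕ → ℕ), Set.InjOn f t → ∑ k ∈ t, ((1:ℝ)/2)^(f k) ≤ 2 := by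
    intro t f hf
    rw [← Finset.sum_image (f := fun i => ((1:ℝ)/2)^i) hf]
    refine le_trans (hs.sum_le_tsum _ fun i _ => by positivity) htot.le
  rw [← Finset.sum_filter_add_sum_filter_not s (fun k => k ≤ j)]
  have h1 := key (s.filter (fun k => k ≤ j)) (fun k => Int.natAbs ((k:ℤ) - j)) (by
    intro a ha b hb hab
    simp at ha hb hab
    omega)
  have h2 := key (s.filter (fun k => ¬ k ≤ j)) (fun k => Int.natAbs ((k:ℤ) - j)) (by
    intro a ha b hb hab
    simp at ha hb hab
    omega)
  linarith

theorem lac_pow (n : ℕ → ℕ) (hl : ∀ k, 2 * n k ≤ n (k+1)) (j d : ℕ) : 2 ^ d * n j ≤ n (j + d) := by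
  induction d with
  | zero => simp
  | succ d ih =>
    have := hl (j+d)
    rw [← add_assoc, pow_succ]
    linarith

theorem one_cell (n : ℕ → ℕ) (h1 : ∀ k, 1 ≤ n k) (hl : ∀ k, 2 * n k ≤ n (k+1))
    (N : ℕ) (hN : 1 ≤ N) (c h : ℝ) (hc : 0 ≤ c) (hh : 0 < h) (hch : c + h ≤ 1) :
    (volume.restrict (Set.Ico (0:ℝ) 1)).real {x | ∀ k ∈ Finset.Ico N (2*N), x ∉ cell (n k) c h}
      ≤ 8 / (N * h) := by
  have : IsProbabilityMeasure (volume.restrict (Set.Ico (0:ℝ) 1)) := ⟨by simp⟩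
  have hpair : ∀ j d, (volume.restrict (Set.Ico (0:ℝ) 1)).real
      (cell (n j) c h ∩ cell (n (j+d)) c h) ≤ h^2 + 2 * h * (1/2)^d := by
    intro j d
    rw [measureReal_restrict_apply ((cell_meas _ _ _).inter (cell_meas _ _ _))]
    refine (pair_vol (n j) (n (j+d)) (h1 _) (h1 _) c h hc hh.le hch).trans ?_
    have := lac_pow n hl j d
    have h3 : (2:ℝ)^d * n j ≤ n (j+d) := by exact_mod_cast this
    have h4 : (0:ℝ) < n (j+d) := by exact_mod_cast h1 _
    gcongr
    rw [div_le_iff₀ h4, one_div, inv_pow, inv_mul_eq_div, le_div_iff₀ (by positivity)]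
    linarith
  have key := second_moment (volume.restrict (Set.Ico (0:ℝ) 1)) (Finset.Ico N (2*N))
    (fun k => cell (n k) c h) (fun k => cell_meas _ _ _) h hh
    (fun j k => 2 * h * (1/2)^(Int.natAbs ((k:ℤ) - j)))
    (fun k _ => by
      rw [measureReal_restrict_apply (cell_meas _ _ _)]
      exact cell_vol (n k) (h1 k) c h hc hh.le hch)
    (fun j _ k _ => by
      rcases le_total j k with hjk | hjk
      · obtain ⟨d, rfl⟩ := Nat.exists_eq_add_of_le hjk
        have : Int.natAbs (((j+d : ℕ):ℤ) - j) = d := by omega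
        rw [this]
        exact hpair j d
      · obtain ⟨d, rfl⟩ := Nat.exists_eq_add_of_le hjk
        have : Int.natAbs ((k:ℤ) - ((k+d : ℕ):ℤ)) = d := by omega
        rw [this, Set.inter_comm]
        exact hpair k d)
  have hsum : ∑ j ∈ Finset.Ico N (2*N), ∑ k ∈ Finset.Ico N (2*N),
      2 * h * ((1:ℝ)/2)^(Int.natAbs ((k:ℤ) - j)) ≤ N * (8 * h) := by
    calc _ ≤ ∑ j ∈ Finset.Ico N (2*N), (8 * h) := by
          apply Finset.sum_le_sum
          intro j _
          rw [← Finset.mul_sum]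
          nlinarith [geom_row j (Finset.Ico N (2*N))]
      _ = _ := by
          rw [Finset.sum_const, Nat.card_Ico, nsmul_eq_mul]
          congr 2
          omega
  have hcard : (Finset.Ico N (2*N)).card = N := by rw [Nat.card_Ico]; omega
  rw [hcard] at key
  have hN0 : (0:ℝ) < N := by exact_mod_cast hN
  rw [le_div_iff₀ (by positivity)]
  have h5 := key.trans hsum
  have h6 : (0:ℝ) < N * h := by positivity
  refine le_of_mul_le_mul_left ?_ h6
  linarith

theorem all_cells (n : ℕ → ℕ) (h1 : ∀ k, 1 ≤ n k) (hl : ∀ k, 2 * n k ≤ n (k+1))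
    (N : ℕ) (hN : 1 ≤ N) (R : ℕ) (hR : 1 ≤ R) :
    (volume.restrict (Set.Ico (0:ℝ) 1)).real
      {x | ∃ r ∈ Finset.range R, ∀ k ∈ Finset.Ico N (2*N), x ∉ cell (n k) (r / R) (1 / R)}
      ≤ 8 * R ^ 2 / N := by
  have hN0 : (0:ℝ) < N := by exact_mod_cast hN
  have hR0 : (0:ℝ) < R := by exact_mod_cast hR
  have e : {x | ∃ r ∈ Finset.range R, ∀ k ∈ Finset.Ico N (2*N), x ∉ cell (n k) (r / R) (1 / R)} =
    ⋃ r ∈ Finset.range R, {x | ∀ k ∈ Finset.Ico N (2*N), x ∉ cell (n k) (r / R) (1 / R)} := by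
    ext x; simp
  rw [e]
  calc _ ≤ ∑ r ∈ Finset.range R, (volume.restrict (Set.Ico (0:ℝ) 1)).real
        {x | ∀ k ∈ Finset.Ico N (2*N), x ∉ cell (n k) (r / R) (1 / R)} :=
        measureReal_biUnion_finset_le _ _
    _ ≤ ∑ r ∈ Finset.range R, 8 / ((N:ℝ) * (1 / (R:ℝ))) := by
        apply Finset.sum_le_sum
        intro r hr
        apply one_cell n h1 hl N hN
        · positivity
        · positivity
        · rw [← add_div, div_le_one hR0]
          exact_mod_cast Finset.mem_range.1 hr
    _ = _ := by
        simp
        field_simp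

theorem asymp (ε : ℝ) (hε : 0 < ε) (n : ℕ → ℕ) (C : ℝ) (hC : 0 < C)
    (hlow : ∀ k, 2 ^ k ≤ n k) (hlog : ∀ k, Real.log (n k) ≤ C * (k+1)) (η : ℝ) (hη : 0 < η) (M : ℕ) :
    ∃ N R : ℕ, M ≤ N ∧ 1 ≤ N ∧ 1 ≤ R ∧ (R:ℝ)^2 ≤ η * N ∧ ∀ k ∈ Finset.Ico N (2*N),
      6 / (R:ℝ) < (Real.log (Real.log (Real.log (n k)))) ^ (ε + 1/2) /
        (Real.log (n k)) ^ ((1:ℝ)/2) := by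
  have hl2 : (0:ℝ) < Real.log 2 := Real.log_pos (by norm_num)
  have t0 : Tendsto (fun N : ℕ => (N:ℝ) * Real.log 2) atTop atTop :=
    tendsto_natCast_atTop_atTop.atTop_mul_const hl2
  have t1 := Real.tendsto_log_atTop.comp t0
  have t2 := Real.tendsto_log_atTop.comp t1
  have t3 := (tendsto_rpow_atTop (by linarith : 0 < ε + 1/2)).comp t2
  have t4 : Tendsto (fun N : ℕ => η * (N:ℝ)) atTop atTop :=
    tendsto_natCast_atTop_atTop.const_mul_atTop hη
  have ev := (eventually_ge_atTop M).and ((eventually_ge_atTop 1).and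
    ((t1.eventually_gt_atTop 0).and ((t2.eventually_gt_atTop 0).and
    ((t3.eventually_gt_atTop (12 * √(2*C) / √η)).and (t4.eventually_ge_atTop 1)))))
  obtain ⟨N, hM, hN, e1, e2, e3, e4⟩ := ev.exists
  simp only [Function.comp] at e1 e2 e3
  have hN0 : (0:ℝ) < N := by exact_mod_cast hN
  have hs1 : 1 ≤ √(η * N) := by rw [Real.one_le_sqrt]; exact e4
  have hR1 : 1 ≤ ⌊√(η * N)⌋₊ := Nat.le_floor (by simpa using hs1)
  have hRle : ((⌊√(η * N)⌋₊ : ℕ) : ℝ) ≤ √(η * N) := Nat.floor_le (by positivity)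
  have hRlt := Nat.lt_floor_add_one (√(η * N))
  have hR1' : (1:ℝ) ≤ (⌊√(η * N)⌋₊ : ℕ) := by exact_mod_cast hR1
  refine ⟨N, ⌊√(η * N)⌋₊, hM, hN, hR1, ?_, ?_⟩
  · calc ((⌊√(η * N)⌋₊ : ℕ) : ℝ)^2 ≤ (√(η * N))^2 := by gcongr
      _ = η * N := Real.sq_sqrt (by positivity)
  · intro k hk
    rw [Finset.mem_Ico] at hk
    have hNk : (N:ℝ) ≤ k := by exact_mod_cast hk.1
    have hk2 : (k:ℝ) + 1 ≤ 2 * N := by exact_mod_cast hk.2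
    have hL1 : (N:ℝ) * Real.log 2 ≤ Real.log (n k) := by
      calc (N:ℝ) * Real.log 2 ≤ k * Real.log 2 := by gcongr
        _ = Real.log (2^k) := by rw [Real.log_pow]
        _ ≤ _ := by
          apply Real.log_le_log (by positivity)
          exact_mod_cast hlow k
    have hL0 : 0 < (N:ℝ) * Real.log 2 := by positivity
    have hLp : 0 < Real.log (n k) := by linarith
    have hLL := Real.log_le_log hL0 hL1
    have hLLL := Real.log_le_log e1 hLL
    have hLu : Real.log (n k) ≤ 2 * C * N := by
      have := hlog k
      nlinarith
    have hnum : (Real.log (Real.log ((N:ℝ) * Real.log 2))) ^ (ε + 1/2) ≤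
        (Real.log (Real.log (Real.log (n k)))) ^ (ε + 1/2) :=
      Real.rpow_le_rpow e2.le hLLL (by linarith)
    have hden : (Real.log (n k)) ^ ((1:ℝ)/2) ≤ √(2*C) * √N := by
      rw [← Real.sqrt_eq_rpow, ← Real.sqrt_mul (by positivity)]
      exact Real.sqrt_le_sqrt hLu
    have hdp : 0 < (Real.log (n k)) ^ ((1:ℝ)/2) := Real.rpow_pos_of_pos hLp _
    have hsη : 0 < √η := Real.sqrt_pos.2 hη
    have hsN : 0 < √(N:ℝ) := Real.sqrt_pos.2 hN0
    have hsC : 0 < √(2*C) := Real.sqrt_pos.2 (by positivity)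
    have hmul : √(η * N) = √η * √N := Real.sqrt_mul hη.le _
    calc 6 / ((⌊√(η * N)⌋₊ : ℕ) : ℝ) ≤ 6 / (√(η * N) / 2) := by
          gcongr
          linarith
      _ = (12 * √(2*C) / √η) / (√(2*C) * √N) := by
          rw [hmul]; field_simp; norm_num
      _ < (Real.log (Real.log ((N:ℝ) * Real.log 2))) ^ (ε + 1/2) / (√(2*C) * √N) := by
          gcongr
      _ ≤ _ := div_le_div₀ (Real.rpow_nonneg (e2.le.trans hLLL) _) hnum hdp hden

theorem dni_lt (x δ : ℝ) (R : ℕ) (hR : 1 ≤ R) (n : ℕ)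
    (h : x ∈ cell n ((⌊(R:ℝ) * Int.fract δ⌋₊ : ℕ) / (R:ℝ)) (1 / R)) :
    dni (n * x - δ) ≤ 1 / R := by
  have hR0 : (0:ℝ) < R := by exact_mod_cast hR
  refine (dni_le _ (⌊(n:ℝ) * x⌋ - ⌊δ⌋)).trans ?_
  have e : (n:ℝ) * x - δ - ((⌊(n:ℝ) * x⌋ - ⌊δ⌋ : ℤ) : ℝ) = Int.fract ((n:ℝ) * x) - Int.fract δ := by
    unfold Int.fract; push_cast; ring
  rw [e]
  have hf := Int.fract_nonneg δ
  have a := Nat.floor_le (by positivity : 0 ≤ (R:ℝ) * Int.fract δ)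
  have b := Nat.lt_floor_add_one ((R:ℝ) * Int.fract δ)
  obtain ⟨h1, h2⟩ := h
  have a' : ((⌊(R:ℝ) * Int.fract δ⌋₊ : ℕ) / (R:ℝ)) ≤ Int.fract δ := by
    rw [div_le_iff₀ hR0]; linarith
  have b' : Int.fract δ < ((⌊(R:ℝ) * Int.fract δ⌋₊ : ℕ) / (R:ℝ)) + 1 / R := by
    rw [← add_div, lt_div_iff₀ hR0]; linarith
  rw [abs_le]
  constructor <;> linarith

theorem dni_sub_int (x : ℝ) (m : ℤ) : dni (x - m) = dni x := by
  unfold dni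
  rw [round_sub_intCast]; push_cast; congr 1; ring

theorem single (ε : ℝ) (hε : 0 < ε) (α γ : ℝ) (hα : α ∈ KSet) :
    ∀ᵐ β : ℝ, ∀ δ : ℝ,
      ∃ᶠ n : ℕ in Filter.atTop,
        (n : ℝ) * dni (n * α - γ) * dni (n * β - δ) <
          (Real.log (Real.log (Real.log n))) ^ (ε + 1/2) / (Real.log n) ^ ((1:ℝ)/2) := by
  obtain ⟨n, C, hC, h1, hl, h6, hlog⟩ := exists_seq α γ hα
  have hlow : ∀ k, 2 ^ k ≤ n k := by
    intro k
    have := lac_pow n hl 0 k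
    have h0 := h1 0
    simp at this
    nlinarith [Nat.one_le_two_pow (n := k)]
  set P : ℝ → ℕ → Prop := fun β M => ∀ δ : ℝ, ∃ k, M ≤ k ∧
    (n k : ℝ) * dni (n k * α - γ) * dni (n k * β - δ) <
      (Real.log (Real.log (Real.log (n k)))) ^ (ε + 1/2) / (Real.log (n k)) ^ ((1:ℝ)/2) with hP
  have hnull : ∀ M, volume ({β | ¬ P β M} ∩ Set.Ico 0 1) = 0 := by
    intro M
    rw [← Measure.restrict_apply' measurableSet_Ico]
    have : IsProbabilityMeasure (volume.restrict (Set.Ico (0:ℝ) 1)) := ⟨by simp⟩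
    have : (volume.restrict (Set.Ico (0:ℝ) 1)).real {β | ¬ P β M} ≤ 0 := by
      apply le_of_forall_pos_le_add
      intro η hη
      obtain ⟨N, R, hM, hN, hR, hRN, hk⟩ := asymp ε hε n C hC hlow hlog (η/8) (by positivity) M
      have hN0 : (0:ℝ) < N := by exact_mod_cast hN
      have hR0 : (0:ℝ) < R := by exact_mod_cast hR
      have hle := all_cells n h1 hl N hN R hR
      have hle2 : 8 * (R:ℝ)^2 / N ≤ η := by
        rw [div_le_iff₀ hN0]; linarith
      rw [zero_add]
      refine le_trans (measureReal_mono ?_ (measure_ne_top _ _)) (hle.trans hle2)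
      intro β hβ
      by_contra hcon
      apply hβ
      intro δ
      simp only [Set.mem_ofPred_eq] at hcon
      push Not at hcon
      obtain ⟨k, hkm, hkc⟩ := hcon ⌊(R:ℝ) * Int.fract δ⌋₊ (by
        rw [Finset.mem_range, Nat.floor_lt (by have := Int.fract_nonneg δ; positivity)]
        nlinarith [Int.fract_lt_one δ])
      refine ⟨k, hM.trans (Finset.mem_Ico.1 hkm).1, ?_⟩
      refine lt_of_le_of_lt ?_ (hk k hkm)
      have hd := dni_lt β δ R hR (n k) hkc
      calc _ ≤ 6 * (1 / (R:ℝ)) := by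
            apply mul_le_mul (h6 k) hd (dni_nonneg _) (by norm_num)
        _ = _ := by ring
    have h0 := le_antisymm this measureReal_nonneg
    rwa [measureReal_eq_zero_iff] at h0
  have hae : ∀ M, ∀ᵐ β : ℝ, P β M := by
    intro M
    rw [ae_iff]
    refine measure_mono_null (t := ⋃ m : ℤ, (fun x : ℝ => x - m) ⁻¹' ({β | ¬ P β M} ∩ Set.Ico 0 1)) ?_ ?_
    · intro β hβ
      rw [Set.mem_iUnion]
      refine ⟨⌊β⌋, ?_, Int.fract_nonneg β, Int.fract_lt_one β⟩
      intro hcon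
      apply hβ
      intro δ
      obtain ⟨k, hk, hk2⟩ := hcon δ
      refine ⟨k, hk, ?_⟩
      have e : (n k : ℝ) * (β - ⌊β⌋) - δ = (n k : ℝ) * β - δ - ((n k * ⌊β⌋ : ℤ) : ℝ) := by
        push_cast; ring
      rw [e, dni_sub_int] at hk2
      exact hk2
    · rw [measure_iUnion_null_iff]
      intro m
      simp only [sub_eq_add_neg]
      rw [measure_preimage_add_right]
      exact hnull M
  filter_upwards [ae_all_iff.2 hae] with β hβ δ
  rw [frequently_atTop]
  intro a
  obtain ⟨k, hk, hk2⟩ := hβ a δ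
  exact ⟨n k, hk.trans (Nat.lt_two_pow_self.le.trans (hlow k)), hk2⟩

theorem stmt_2 (ε : ℝ) (hε : 0 < ε) (α γ : ℕ → ℝ) (hα : ∀ i, α i ∈ KSet) :
    ∀ᵐ β : ℝ, ∀ i : ℕ, ∀ δ : ℝ,
      ∃ᶠ n : ℕ in Filter.atTop,
        (n : ℝ) * dni (n * α i - γ i) * dni (n * β - δ) <
          (Real.log (Real.log (Real.log n))) ^ (ε + 1/2) / (Real.log n) ^ ((1:ℝ)/2) := by
  rw [ae_all_iff]
  intro i
  exact single ε hε (α i) (γ i) (hα i)
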